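/- Let m ≤ n be positive integers, let Ψ = Ψ_{m,n} : ℝ² → ℂ² be the Lee–Wang map, λ(s) = ‖∂_sΨ‖², and for v ∈ ℂ² let P(v) = v − (⟨v, ∂_sΨ⟩/λ)·∂_sΨ − (⟨v, ∂_tΨ⟩/λ)·∂_tΨ denote the projection onto the normal space of Ψ. Then the squared norm of the second fundamental form, |σ|² = (1/λ²)·( ‖P(∂_s²Ψ)‖² + 2‖P(∂_s∂_tΨ)‖² + ‖P(∂_t²Ψ)‖² ), satisfies for all (s,t): (3m² + n²)/(n(m+n)) ≤ |σ|² ≤ (m² + 3n²)/(m(m+n)). -/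

import Mathlib

/-- Real inner product on ℂ ≅ ℝ²: ⟨u,v⟩ = Re(u · conj v). -/
noncomputable def rinner (u v : ℂ) : ℝ := u.re * v.re + u.im * v.im

/-- Real inner product on ℂ² ≅ ℝ⁴. -/
noncomputable def rinner2 (u v : ℂ × ℂ) : ℝ := rinner u.1 v.1 + rinner u.2 v.2

/-- Squared Euclidean norm on ℂ² ≅ ℝ⁴. -/
noncomputable def norm2 (v : ℂ × ℂ) : ℝ := ‖v.1‖ ^ 2 + ‖v.2‖ ^ 2

/-- Partial derivative of F : ℝ² → ℂ² in the first variable. -/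
noncomputable def pd1 (F : ℝ → ℝ → ℂ × ℂ) (a b : ℝ) : ℂ × ℂ := deriv (fun x => F x b) a

/-- Partial derivative of F : ℝ² → ℂ² in the second variable. -/
noncomputable def pd2 (F : ℝ → ℝ → ℂ × ℂ) (a b : ℝ) : ℂ × ℂ := deriv (fun y => F a y) b

/-- The Lee–Wang map Ψ_{m,n}(s,t) = √(m+n)((1/√n)cos s e^{i√(n/m)t}, (1/√m)sin s e^{i√(m/n)t}). -/
noncomputable def leeWang (m n : ℕ) (s t : ℝ) : ℂ × ℂ :=
  ((Real.sqrt (m + n) * (1 / Real.sqrt n) * Real.cos s : ℝ)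
      * Complex.exp (Complex.I * (Real.sqrt ((n : ℝ) / m) * t)),
   (Real.sqrt (m + n) * (1 / Real.sqrt m) * Real.sin s : ℝ)
      * Complex.exp (Complex.I * (Real.sqrt ((m : ℝ) / n) * t)))

/-- The conformal factor λ = ‖∂ₛΨ‖² of the Lee–Wang map. -/
noncomputable def lamLW (m n : ℕ) (s t : ℝ) : ℝ := norm2 (pd1 (leeWang m n) s t)

/-- Projection of v ∈ ℂ² onto the normal space of the Lee–Wang immersion at (s,t). -/
noncomputable def projLW (m n : ℕ) (s t : ℝ) (v : ℂ × ℂ) : ℂ × ℂ :=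
  v - (rinner2 v (pd1 (leeWang m n) s t) / lamLW m n s t) • pd1 (leeWang m n) s t
    - (rinner2 v (pd2 (leeWang m n) s t) / lamLW m n s t) • pd2 (leeWang m n) s t

/-- The squared norm of the second fundamental form of the Lee–Wang immersion,
|σ|² = (1/λ²)(‖P(∂ₛ²Ψ)‖² + 2‖P(∂ₛ∂ₜΨ)‖² + ‖P(∂ₜ²Ψ)‖²). -/
noncomputable def sigma2LW (m n : ℕ) (s t : ℝ) : ℝ :=
  (1 / (lamLW m n s t) ^ 2) *
    (norm2 (projLW m n s t (pd1 (pd1 (leeWang m n)) s t))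
      + 2 * norm2 (projLW m n s t (pd2 (pd1 (leeWang m n)) s t))
      + norm2 (projLW m n s t (pd2 (pd2 (leeWang m n)) s t)))

/-! The torus `Ψ_{m,n}` is swept out by a planar ellipse `c(s) = (a cos s, b sin s)` under the
one-parameter group of isometries `(z, w) ↦ (e^{ipt} z, e^{iqt} w)`, with `p = b/a`, `q = a/b`,
`a² = (m+n)/n` and `b² = (m+n)/m`, so that `|σ|²` may be computed at `t = 0`. There `∂ₛΨ`, `∂ₛ²Ψ`,
`∂ₜ²Ψ` lie in `ℝ²` and `∂ₜΨ`, `∂ₛ∂ₜΨ` in `iℝ²`, so each normal component is the height of a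
parallelogram in a plane, i.e. a 2 × 2 determinant divided by `√λ`. As `a² + b² = a²b²`, this gives
`|σ|² = a²b² (3 + (λ - 1)²) / λ³` with `λ = a² sin² s + b² cos² s`, which is decreasing in
`λ ∈ [a², b²]`. -/

/-- The component of `v` orthogonal to `X` and `Y`, for `X` and `Y` orthogonal and of the same
nonzero length; this is why both coefficients are divided by `norm2 X`. -/
noncomputable def normalComponent (X Y v : ℂ × ℂ) : ℂ × ℂ :=
  v - (rinner2 v X / norm2 X) • X - (rinner2 v Y / norm2 X) • Y

/-- The squared norm of the second fundamental form of a conformal immersion `F`, whose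
conformal factor is read off as `norm2 (pd1 F s t)`. -/
noncomputable def sffNormSq (F : ℝ → ℝ → ℂ × ℂ) (s t : ℝ) : ℝ :=
  1 / norm2 (pd1 F s t) ^ 2 *
    (norm2 (normalComponent (pd1 F s t) (pd2 F s t) (pd1 (pd1 F) s t))
      + 2 * norm2 (normalComponent (pd1 F s t) (pd2 F s t) (pd2 (pd1 F) s t))
      + norm2 (normalComponent (pd1 F s t) (pd2 F s t) (pd2 (pd2 F) s t)))

theorem sigma2LW_eq_sffNormSq (m n : ℕ) (s t : ℝ) :
    sigma2LW m n s t = sffNormSq (leeWang m n) s t :=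
  rfl

section TorusRotation

/-- The one-parameter group of isometries of `ℂ²` with rotation speeds `p` and `q`. -/
noncomputable def torusRotation (p q t : ℝ) (v : ℂ × ℂ) : ℂ × ℂ :=
  (v.1 * Complex.exp (Complex.I * (p * t)), v.2 * Complex.exp (Complex.I * (q * t)))

/-- The infinitesimal generator of `torusRotation p q`. -/
noncomputable def rotationGenerator (p q : ℝ) (v : ℂ × ℂ) : ℂ × ℂ :=
  (v.1 * (p * Complex.I), v.2 * (q * Complex.I))

/-- The surface swept out by the curve `c` under the group `torusRotation p q`. -/
noncomputable def torusOrbit (p q : ℝ) (c : ℝ → ℂ × ℂ) (s t : ℝ) : ℂ × ℂ :=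
  torusRotation p q t (c s)

variable (p q : ℝ)

theorem norm_exp_I_mul_ofReal_mul (x y : ℝ) : ‖Complex.exp (Complex.I * (x * y))‖ = 1 := by
  rw [← Complex.ofReal_mul, Complex.norm_exp_I_mul_ofReal]

theorem rinner_mul_right (u v z : ℂ) : rinner (u * z) (v * z) = ‖z‖ ^ 2 * rinner u v := by
  simp only [rinner, Complex.mul_re, Complex.mul_im, Complex.sq_norm, Complex.normSq_apply]
  ring

theorem rinner2_torusRotation (t : ℝ) (u v : ℂ × ℂ) :
    rinner2 (torusRotation p q t u) (torusRotation p q t v) = rinner2 u v := by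
  simp only [rinner2, torusRotation, rinner_mul_right, norm_exp_I_mul_ofReal_mul, one_pow, one_mul]

theorem norm2_torusRotation (t : ℝ) (v : ℂ × ℂ) : norm2 (torusRotation p q t v) = norm2 v := by
  simp only [norm2, torusRotation, norm_mul, norm_exp_I_mul_ofReal_mul, mul_one]

theorem torusRotation_sub (t : ℝ) (u v : ℂ × ℂ) :
    torusRotation p q t (u - v) = torusRotation p q t u - torusRotation p q t v :=
  Prod.ext (sub_mul _ _ _) (sub_mul _ _ _)

theorem torusRotation_smul (t r : ℝ) (v : ℂ × ℂ) :
    torusRotation p q t (r • v) = r • torusRotation p q t v :=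
  Prod.ext (smul_mul_assoc _ _ _) (smul_mul_assoc _ _ _)

theorem normalComponent_torusRotation (t : ℝ) (X Y v : ℂ × ℂ) :
    normalComponent (torusRotation p q t X) (torusRotation p q t Y) (torusRotation p q t v) =
      torusRotation p q t (normalComponent X Y v) := by
  simp only [normalComponent, rinner2_torusRotation, norm2_torusRotation, torusRotation_sub,
    torusRotation_smul]

theorem hasDerivAt_mul_exp_I_mul (z : ℂ) (t : ℝ) :
    HasDerivAt (fun t : ℝ => z * Complex.exp (Complex.I * (p * t)))
      (z * (p * Complex.I) * Complex.exp (Complex.I * (p * t))) t := by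
  have hphase : HasDerivAt (fun t : ℝ => Complex.I * ((p : ℂ) * t)) (Complex.I * (p * 1)) t :=
    (Complex.ofRealCLM.hasDerivAt.const_mul _).const_mul _
  exact (hphase.cexp.const_mul z).congr_deriv (by ring)

variable {p q} {c c' : ℝ → ℂ × ℂ}

theorem pd1_torusOrbit (hc : ∀ s, HasDerivAt c (c' s) s) :
    pd1 (torusOrbit p q c) = torusOrbit p q c' := by
  funext s t
  exact (((hasFDerivAt_fst.comp_hasDerivAt s (hc s)).mul_const _).prodMk
    ((hasFDerivAt_snd.comp_hasDerivAt s (hc s)).mul_const _)).deriv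

theorem pd2_torusOrbit :
    pd2 (torusOrbit p q c) = torusOrbit p q (fun s => rotationGenerator p q (c s)) := by
  funext s t
  exact ((hasDerivAt_mul_exp_I_mul p (c s).1 t).prodMk
    (hasDerivAt_mul_exp_I_mul q (c s).2 t)).deriv

theorem sffNormSq_torusOrbit {c'' : ℝ → ℂ × ℂ} (hc : ∀ s, HasDerivAt c (c' s) s)
    (hc' : ∀ s, HasDerivAt c' (c'' s) s) (s t : ℝ) :
    sffNormSq (torusOrbit p q c) s t =
      1 / norm2 (c' s) ^ 2 *
        (norm2 (normalComponent (c' s) (rotationGenerator p q (c s)) (c'' s))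
          + 2 * norm2 (normalComponent (c' s) (rotationGenerator p q (c s))
              (rotationGenerator p q (c' s)))
          + norm2 (normalComponent (c' s) (rotationGenerator p q (c s))
              (rotationGenerator p q (rotationGenerator p q (c s))))) := by
  simp only [sffNormSq, pd1_torusOrbit hc, pd1_torusOrbit hc', pd2_torusOrbit, torusOrbit,
    normalComponent_torusRotation, norm2_torusRotation]

end TorusRotation

section RealImagPair

/-- The vector `(x, y)` of the real plane `ℝ² ⊆ ℂ²`. -/
def realPair (x y : ℝ) : ℂ × ℂ := (x, y)

/-- The vector `(x i, y i)` of the imaginary plane `iℝ² ⊆ ℂ²`, the orthogonal complement of the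
real plane. -/
noncomputable def imagPair (x y : ℝ) : ℂ × ℂ := (x * Complex.I, y * Complex.I)

theorem norm2_realPair (x y : ℝ) : norm2 (realPair x y) = x ^ 2 + y ^ 2 := by
  simp only [norm2, realPair, Complex.norm_real, Real.norm_eq_abs, sq_abs]

theorem norm2_imagPair (x y : ℝ) : norm2 (imagPair x y) = x ^ 2 + y ^ 2 := by
  simp only [norm2, imagPair, norm_mul, Complex.norm_I, mul_one, Complex.norm_real,
    Real.norm_eq_abs, sq_abs]

theorem rinner2_realPair (x y z w : ℝ) :
    rinner2 (realPair x y) (realPair z w) = x * z + y * w := by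
  simp [rinner2, rinner, realPair]

theorem rinner2_imagPair (x y z w : ℝ) :
    rinner2 (imagPair x y) (imagPair z w) = x * z + y * w := by
  simp [rinner2, rinner, imagPair]

theorem rinner2_realPair_imagPair (x y z w : ℝ) :
    rinner2 (realPair x y) (imagPair z w) = 0 := by
  simp [rinner2, rinner, realPair, imagPair]

theorem rinner2_imagPair_realPair (x y z w : ℝ) :
    rinner2 (imagPair x y) (realPair z w) = 0 := by
  simp [rinner2, rinner, realPair, imagPair]

theorem realPair_sub_smul (x y z w r : ℝ) :
    realPair x y - r • realPair z w = realPair (x - r * z) (y - r * w) := by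
  simp [realPair]

theorem imagPair_sub_smul (x y z w r : ℝ) :
    imagPair x y - r • imagPair z w = imagPair (x - r * z) (y - r * w) := by
  simp [imagPair, sub_mul, mul_assoc]

theorem rotationGenerator_realPair (p q x y : ℝ) :
    rotationGenerator p q (realPair x y) = imagPair (p * x) (q * y) := by
  ext1 <;> simp only [rotationGenerator, realPair, imagPair, Complex.ofReal_mul] <;> ring

theorem rotationGenerator_imagPair (p q x y : ℝ) :
    rotationGenerator p q (imagPair x y) = realPair (-(p * x)) (-(q * y)) := by
  ext1 <;> simp only [rotationGenerator, realPair, imagPair, Complex.ofReal_neg,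
    Complex.ofReal_mul] <;> ring_nf <;> simp only [Complex.I_sq] <;> ring

theorem hasDerivAt_realPair {f g : ℝ → ℝ} {f' g' s : ℝ} (hf : HasDerivAt f f' s)
    (hg : HasDerivAt g g' s) :
    HasDerivAt (fun s => realPair (f s) (g s)) (realPair f' g') s :=
  hf.ofReal_comp.prodMk hg.ofReal_comp

/-- Lagrange's identity `(x² + y²)(z² + w²) - (x z + y w)² = (x w - y z)²`, divided by `l`. -/
theorem sq_add_sq_sub_proj (x y : ℝ) {z w l : ℝ} (hl : z ^ 2 + w ^ 2 = l) (hl0 : l ≠ 0) :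
    (x - (x * z + y * w) / l * z) ^ 2 + (y - (x * z + y * w) / l * w) ^ 2 =
      (x * w - y * z) ^ 2 / l := by
  subst hl
  field_simp
  ring

theorem norm2_normalComponent_realPair (x y u v : ℝ) {z w l : ℝ} (hl : z ^ 2 + w ^ 2 = l)
    (hl0 : l ≠ 0) :
    norm2 (normalComponent (realPair z w) (imagPair u v) (realPair x y)) =
      (x * w - y * z) ^ 2 / l := by
  rw [normalComponent, rinner2_realPair_imagPair, zero_div, zero_smul, sub_zero, rinner2_realPair,
    realPair_sub_smul, norm2_realPair, norm2_realPair, hl, sq_add_sq_sub_proj x y hl hl0]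

theorem norm2_normalComponent_imagPair (x y : ℝ) {z w u v l : ℝ} (hl : z ^ 2 + w ^ 2 = l)
    (huv : u ^ 2 + v ^ 2 = l) (hl0 : l ≠ 0) :
    norm2 (normalComponent (realPair z w) (imagPair u v) (imagPair x y)) =
      (x * v - y * u) ^ 2 / l := by
  rw [normalComponent, rinner2_imagPair_realPair, zero_div, zero_smul, sub_zero, rinner2_imagPair,
    imagPair_sub_smul, norm2_imagPair, norm2_realPair, hl, sq_add_sq_sub_proj x y huv hl0]

end RealImagPair

section EllipticTorus

/-- The surface swept out by the ellipse with semi-axes `a` and `b` under rotation at speeds `b / a`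
and `a / b`, the choice that makes the parametrization conformal. -/
noncomputable def ellipticTorus (a b : ℝ) : ℝ → ℝ → ℂ × ℂ :=
  torusOrbit (b / a) (a / b) fun s => realPair (a * Real.cos s) (b * Real.sin s)

/-- The conformal factor `λ` of `ellipticTorus a b`. -/
noncomputable def ellipticFactor (a b s : ℝ) : ℝ := a ^ 2 * Real.sin s ^ 2 + b ^ 2 * Real.cos s ^ 2

variable {a b : ℝ}

theorem ellipticFactor_pos (ha : a ≠ 0) (hb : b ≠ 0) (s : ℝ) : 0 < ellipticFactor a b s := by
  unfold ellipticFactor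
  rcases eq_or_ne (Real.sin s) 0 with hsin | hsin
  · rw [hsin, Real.cos_sq', hsin]
    positivity
  · positivity

theorem ellipticFactor_mem_Icc (hab : a ^ 2 ≤ b ^ 2) (s : ℝ) :
    ellipticFactor a b s ∈ Set.Icc (a ^ 2) (b ^ 2) := by
  have hsin : a ^ 2 * Real.sin s ^ 2 ≤ b ^ 2 * Real.sin s ^ 2 := by gcongr
  have hcos : a ^ 2 * Real.cos s ^ 2 ≤ b ^ 2 * Real.cos s ^ 2 := by gcongr
  unfold ellipticFactor
  constructor
  · linear_combination hcos - a ^ 2 * Real.sin_sq_add_cos_sq s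
  · linear_combination hsin + b ^ 2 * Real.sin_sq_add_cos_sq s

theorem hasDerivAt_ellipse (a b s : ℝ) :
    HasDerivAt (fun s => realPair (a * Real.cos s) (b * Real.sin s))
      (realPair (a * -Real.sin s) (b * Real.cos s)) s :=
  hasDerivAt_realPair ((Real.hasDerivAt_cos s).const_mul a) ((Real.hasDerivAt_sin s).const_mul b)

theorem hasDerivAt_ellipse_velocity (a b s : ℝ) :
    HasDerivAt (fun s => realPair (a * -Real.sin s) (b * Real.cos s))
      (realPair (a * -Real.cos s) (b * -Real.sin s)) s :=
  hasDerivAt_realPair ((Real.hasDerivAt_sin s).neg.const_mul a)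
    ((Real.hasDerivAt_cos s).const_mul b)

theorem sffNormSq_ellipticTorus (ha : a ≠ 0) (hb : b ≠ 0) (s t : ℝ) :
    sffNormSq (ellipticTorus a b) s t =
      (3 * (a ^ 2 * b ^ 2) ^ 2 + ((a ^ 2 + b ^ 2) * ellipticFactor a b s - a ^ 2 * b ^ 2) ^ 2) /
        (a ^ 2 * b ^ 2 * ellipticFactor a b s ^ 3) := by
  set l := ellipticFactor a b s with hl
  have hl0 : l ≠ 0 := (ellipticFactor_pos ha hb s).ne'
  have hpyth := Real.sin_sq_add_cos_sq s
  have hnorm₁ : (a * -Real.sin s) ^ 2 + (b * Real.cos s) ^ 2 = l := by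
    rw [hl, ellipticFactor]
    ring
  have hnorm₂ : (b / a * (a * Real.cos s)) ^ 2 + (a / b * (b * Real.sin s)) ^ 2 = l := by
    rw [hl, ellipticFactor]
    field_simp
    ring
  have hdet_ss : a * -Real.cos s * (b * Real.cos s) - b * -Real.sin s * (a * -Real.sin s) =
      -(a * b) := by
    linear_combination -(a * b) * hpyth
  have hdet_st : b / a * (a * -Real.sin s) * (a / b * (b * Real.sin s)) -
      a / b * (b * Real.cos s) * (b / a * (a * Real.cos s)) = -(a * b) := by
    field_simp
    linear_combination -hpyth
  have hdet_tt : -(b / a * (b / a * (a * Real.cos s))) * (b * Real.cos s) -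
      -(a / b * (a / b * (b * Real.sin s))) * (a * -Real.sin s) =
      -((a ^ 2 + b ^ 2) * l - a ^ 2 * b ^ 2) / (a * b) := by
    rw [hl, ellipticFactor]
    field_simp
    linear_combination a ^ 2 * b ^ 2 * hpyth
  rw [ellipticTorus, sffNormSq_torusOrbit (hasDerivAt_ellipse a b)
    (hasDerivAt_ellipse_velocity a b)]
  simp only [rotationGenerator_realPair, rotationGenerator_imagPair, norm2_realPair, hnorm₁,
    norm2_normalComponent_realPair _ _ _ _ hnorm₁ hl0,
    norm2_normalComponent_imagPair _ _ hnorm₁ hnorm₂ hl0, hdet_ss, hdet_st, hdet_tt]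
  field_simp
  ring

theorem antitoneOn_three_add_sub_one_sq_div_cube :
    AntitoneOn (fun r : ℝ => (3 + (r - 1) ^ 2) / r ^ 3) (Set.Ioi 0) := by
  have cubic_mono {x y : ℝ} (hxy : x ≤ y) :
      4 * x ^ 3 - 2 * x ^ 2 + x ≤ 4 * y ^ 3 - 2 * y ^ 2 + y := by
    have hquot : 0 ≤ 4 * (x ^ 2 + x * y + y ^ 2) - 2 * (x + y) + 1 := by
      have hsq : 4 * (x ^ 2 + x * y + y ^ 2) - 2 * (x + y) + 1 =
          (x - y) ^ 2 + (3 * (x + y) - 1) ^ 2 / 3 + 2 / 3 := by ring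
      rw [hsq]
      positivity
    linear_combination (y - x) * hquot
  have hinv {r : ℝ} (hr : 0 < r) :
      (3 + (r - 1) ^ 2) / r ^ 3 = 4 * r⁻¹ ^ 3 - 2 * r⁻¹ ^ 2 + r⁻¹ := by
    field_simp
    ring
  intro x hx y hy hxy
  simp only [hinv hx, hinv hy]
  exact cubic_mono (inv_anti₀ hx hxy)

theorem sffNormSq_ellipticTorus_of_sq_add_sq_eq (ha : a ≠ 0) (hb : b ≠ 0)
    (hab : a ^ 2 + b ^ 2 = a ^ 2 * b ^ 2) (s t : ℝ) :
    sffNormSq (ellipticTorus a b) s t =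
      a ^ 2 * b ^ 2 * ((3 + (ellipticFactor a b s - 1) ^ 2) / ellipticFactor a b s ^ 3) := by
  have hl : ellipticFactor a b s ≠ 0 := (ellipticFactor_pos ha hb s).ne'
  rw [sffNormSq_ellipticTorus ha hb, hab]
  field_simp

theorem sffNormSq_ellipticTorus_mem_Icc (ha : a ≠ 0) (hle : a ^ 2 ≤ b ^ 2)
    (hab : a ^ 2 + b ^ 2 = a ^ 2 * b ^ 2) (s t : ℝ) :
    sffNormSq (ellipticTorus a b) s t ∈
      Set.Icc (a ^ 2 * b ^ 2 * ((3 + (b ^ 2 - 1) ^ 2) / (b ^ 2) ^ 3))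
        (a ^ 2 * b ^ 2 * ((3 + (a ^ 2 - 1) ^ 2) / (a ^ 2) ^ 3)) := by
  have ha2 : 0 < a ^ 2 := by positivity
  have hb2 : 0 < b ^ 2 := ha2.trans_le hle
  have hb : b ≠ 0 := sq_pos_iff.mp hb2
  have hl : 0 < ellipticFactor a b s := ellipticFactor_pos ha hb s
  obtain ⟨hlower, hupper⟩ := ellipticFactor_mem_Icc hle s
  rw [sffNormSq_ellipticTorus_of_sq_add_sq_eq ha hb hab]
  exact ⟨mul_le_mul_of_nonneg_left
      (antitoneOn_three_add_sub_one_sq_div_cube hl hb2 hupper) (by positivity),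
    mul_le_mul_of_nonneg_left
      (antitoneOn_three_add_sub_one_sq_div_cube ha2 hl hlower) (by positivity)⟩

end EllipticTorus

section LeeWang

variable {m n : ℕ}

theorem leeWang_eq_ellipticTorus (hm : 0 < m) :
    leeWang m n = ellipticTorus √((m + n) / n) √((m + n) / m) := by
  have hsum : (0 : ℝ) < m + n := by positivity
  have hsemiaxis (k : ℝ) : √((m : ℝ) + n) * (1 / √k) = √((m + n) / k) := by
    rw [mul_one_div, Real.sqrt_div hsum.le]
  have hspeed (x : ℝ) {y : ℝ} (hy : 0 ≤ y) : √((m + n) / x) / √((m + n) / y) = √(y / x) := by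
    rw [← Real.sqrt_div' _ (by positivity), div_div_div_cancel_left' _ _ hsum.ne']
  funext s t
  simp only [leeWang, ellipticTorus, torusOrbit, torusRotation, realPair, hsemiaxis,
    hspeed _ (Nat.cast_nonneg _)]

end LeeWang

/-- Bounds for the squared norm of the second fundamental form of the Lee–Wang
tori: (3m² + n²)/(n(m+n)) ≤ |σ|² ≤ (m² + 3n²)/(m(m+n)). -/
theorem lee_wang_second_fundamental_form (m n : ℕ) (hm : 0 < m) (hmn : m ≤ n) :
    ∀ s t : ℝ,
      (3 * (m : ℝ) ^ 2 + (n : ℝ) ^ 2) / ((n : ℝ) * ((m : ℝ) + n)) ≤ sigma2LW m n s t ∧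
      sigma2LW m n s t ≤ ((m : ℝ) ^ 2 + 3 * (n : ℝ) ^ 2) / ((m : ℝ) * ((m : ℝ) + n)) := by
  intro s t
  have hn : 0 < n := hm.trans_le hmn
  have hsq₁ : √((m + n) / n : ℝ) ^ 2 = (m + n) / n := Real.sq_sqrt (by positivity)
  have hsq₂ : √((m + n) / m : ℝ) ^ 2 = (m + n) / m := Real.sq_sqrt (by positivity)
  have hle : √((m + n) / n : ℝ) ^ 2 ≤ √((m + n) / m) ^ 2 := by
    rw [hsq₁, hsq₂]
    gcongr
  have hnormalized : √((m + n) / n : ℝ) ^ 2 + √((m + n) / m) ^ 2 =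
      √((m + n) / n) ^ 2 * √((m + n) / m) ^ 2 := by
    rw [hsq₁, hsq₂]
    field_simp
  rw [← Set.mem_Icc, sigma2LW_eq_sffNormSq, leeWang_eq_ellipticTorus hm]
  convert sffNormSq_ellipticTorus_mem_Icc (by positivity) hle hnormalized s t using 2 <;>
  · rw [hsq₁, hsq₂]
    field_simp
    ring
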